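/- There exists an absolute constant C > 0 such that for every measurable w : Π → ℝ and every (r, s) ∈ Π, one has ∫∫_Π |F^r(r, s, r̄, s̄)| |w(r̄, s̄)| ds̄ dr̄ ≤ C r Λ(W/ρ) and ∫∫_Π |F^s(r, s, r̄, s̄)| |w(r̄, s̄)| ds̄ dr̄ ≤ C s Λ(W/σ); in particular, if Λ(W/ρ) < ∞ and Λ(W/σ) < ∞, then |u^r[w](r, s)| ≤ C r Λ(W/ρ) and |u^s[w](r, s)| ≤ C s Λ(W/σ) for all (r, s) ∈ Π. -/

import Mathlib

open MeasureTheory Real ENNReal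

/-- `X₋₋ = (r−r̄)² + (s−s̄)² + 2rr̄(1−cos θ̄) + 2ss̄(1−cos φ̄)`. -/
noncomputable def Xmm (r s rb sb θ φ : ℝ) : ℝ :=
  (r - rb) ^ 2 + (s - sb) ^ 2 + 2 * r * rb * (1 - Real.cos θ) + 2 * s * sb * (1 - Real.cos φ)

/-- The Biot–Savart kernel `F^r` of the bi-rotational Euler flow. -/
noncomputable def Fr (r s rb sb : ℝ) : ℝ :=
  (2 / Real.pi ^ 2) * ∫ θ in (0:ℝ)..Real.pi, ∫ φ in (0:ℝ)..Real.pi,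
    rb * sb * Real.cos θ * (sb - s * Real.cos φ) / (Xmm r s rb sb θ φ) ^ 2

/-- `F^s(r,s,r̄,s̄) = F^r(s,r,s̄,r̄)`. -/
noncomputable def Fs (r s rb sb : ℝ) : ℝ := Fr s r sb rb

/-- The quadrant `Π = {(r,s) : r ≥ 0, s ≥ 0}`. -/
def quadrant : Set (ℝ × ℝ) := Set.Ici (0:ℝ) ×ˢ Set.Ici (0:ℝ)

/-- `u^r[w](r,s) = −∫∫_Π F^r(r,s,r̄,s̄) w(r̄,s̄) ds̄ dr̄`. -/
noncomputable def uR (w : ℝ × ℝ → ℝ) (r s : ℝ) : ℝ :=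
  -∫ p in quadrant, Fr r s p.1 p.2 * w p

/-- `u^s[w](r,s) = ∫∫_Π F^s(r,s,r̄,s̄) w(r̄,s̄) ds̄ dr̄`. -/
noncomputable def uS (w : ℝ × ℝ → ℝ) (r s : ℝ) : ℝ :=
  ∫ p in quadrant, Fs r s p.1 p.2 * w p

/-- `r_x = √(x₁² + x₂²)` for `x ∈ ℝ⁴`. -/
noncomputable def rx (x : Fin 4 → ℝ) : ℝ := Real.sqrt ((x 0) ^ 2 + (x 1) ^ 2)

/-- `s_x = √(x₃² + x₄²)` for `x ∈ ℝ⁴`. -/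
noncomputable def sx (x : Fin 4 → ℝ) : ℝ := Real.sqrt ((x 2) ^ 2 + (x 3) ^ 2)

/-- `Λ(f) = ∫₀^∞ (vol{x ∈ ℝ⁴ : |f(x)| > λ})^{1/4} dλ`, comparable to the
Lorentz `L^{4,1}(ℝ⁴)` norm of `f`. -/
noncomputable def Lam (f : (Fin 4 → ℝ) → ℝ) : ℝ≥0∞ :=
  ∫⁻ l in Set.Ioi (0:ℝ), (volume {x : Fin 4 → ℝ | l < |f x|}) ^ ((1:ℝ)/4)

/-!
Identify `ℝ⁴` with `ℂ × ℂ`. Then `Xmm r s rb sb θ φ` is the squared distance `|y - x|²` from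
`x = (r, s)` to the point `y` with polar coordinates `(rb, θ)` and `(sb, φ)`, and it dominates
`(sb - s cos φ)²`; hence the integrand of `Fr` is at most `rb sb |y - x|⁻³`. The factor `rb` can be
replaced by a multiple of `r`: this is clear for `rb ≤ 2 r`, while for `rb > 2 r` one first
subtracts from the factor of `cos θ` its value at `θ = π / 2`, whose integral against `cos θ`
vanishes. Undoing the polar coordinates bounds the integral of `|Fr| |w|` by a multiple of `r` times
`∫ |y - x|⁻³ |W/ρ|(y) dy`. Since `|y - x|⁻³` is in weak `L^(4/3)`, its integral over a set `A` is at
most a multiple of `vol(A)^(1/4)`, and applying this to the superlevel sets of `|W/ρ|` gives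
`Λ(W/ρ)`. Only the growth of balls enters, so `|y - x|` may be taken to be the maximum distance on
`ℂ × ℂ`.
-/

section LayerCake

variable {α E : Type*} [MeasurableSpace α] {μ : Measure α}

/-- The functional `∫₀^∞ μ{‖f‖ > l}^q dl`, comparable to the norm of the Lorentz space `L^{1/q,1}`;
`Lam` is the case `q = 1/4` on `ℝ⁴`. -/
noncomputable def lorentzIntegral [Norm E] (q : ℝ) (f : α → E) (μ : Measure α) : ℝ≥0∞ :=
  ∫⁻ l in Set.Ioi (0 : ℝ), μ {x | l < ‖f x‖} ^ q

theorem lorentzIntegral_comp_measurePreserving {β : Type*} [MeasurableSpace β] {ν : Measure β}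
    [NormedAddCommGroup E] {e : α → β} (he : MeasurePreserving e μ ν) {f : β → E}
    (hf : AEStronglyMeasurable f ν) (q : ℝ) :
    lorentzIntegral q (f ∘ e) μ = lorentzIntegral q f ν := by
  refine lintegral_congr fun l => ?_
  rw [← he.measure_preimage (nullMeasurableSet_lt aemeasurable_const hf.norm.aemeasurable)]
  rfl

theorem lintegral_Ioi_ofReal_rpow_neg {p T : ℝ} (hp : 1 < p) (hT : 0 < T) :
    ∫⁻ t in Set.Ioi T, ENNReal.ofReal (t ^ (-p)) = ENNReal.ofReal (T ^ (1 - p) / (p - 1)) := by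
  have h_nonneg : ∀ᵐ t ∂volume.restrict (Set.Ioi T), 0 ≤ t ^ (-p) :=
    (ae_restrict_iff' measurableSet_Ioi).2 <|
      .of_forall fun _ ht => Real.rpow_nonneg (hT.trans ht).le _
  rw [← ofReal_integral_eq_lintegral_ofReal
      (integrableOn_Ioi_rpow_of_lt (neg_lt_neg hp) hT) h_nonneg,
    integral_Ioi_rpow_of_lt (neg_lt_neg hp) hT, neg_add_eq_sub, ← neg_sub p 1, neg_div_neg_eq]

theorem lintegral_Ioi_le_of_le_const_of_le_rpow_neg {m : ℝ → ℝ≥0∞} {a B p : ℝ} (ha : 0 < a)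
    (hB : 0 ≤ B) (hp : 1 < p) (h_const : ∀ t, m t ≤ ENNReal.ofReal a)
    (h_rpow : ∀ t, 0 < t → m t ≤ ENNReal.ofReal (B * t ^ (-p))) :
    ∫⁻ t in Set.Ioi 0, m t ≤ ENNReal.ofReal (1 + B / (p - 1)) * ENNReal.ofReal a ^ (1 - p⁻¹) := by
  -- The two bounds on `m` agree, up to constants, at `t = a ^ (-1/p)`.
  set T : ℝ := a ^ (-p⁻¹) with hT
  have hT_pos : 0 < T := Real.rpow_pos_of_pos ha _
  have h_low : ∫⁻ t in Set.Ioc 0 T, m t ≤ ENNReal.ofReal (a ^ (1 - p⁻¹)) := calc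
    _ ≤ ∫⁻ _ in Set.Ioc 0 T, ENNReal.ofReal a := lintegral_mono h_const
    _ = ENNReal.ofReal (a * T) := by
      rw [setLIntegral_const, Real.volume_Ioc, sub_zero, ENNReal.ofReal_mul ha.le]
    _ = _ := by rw [hT, sub_eq_add_neg, Real.rpow_add ha, Real.rpow_one]
  have h_high : ∫⁻ t in Set.Ioi T, m t ≤ ENNReal.ofReal (B / (p - 1) * a ^ (1 - p⁻¹)) := calc
    _ ≤ ∫⁻ t in Set.Ioi T, ENNReal.ofReal B * ENNReal.ofReal (t ^ (-p)) :=
      setLIntegral_mono (by fun_prop) fun t ht =>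
        (h_rpow t (hT_pos.trans ht)).trans_eq (ENNReal.ofReal_mul hB)
    _ = ENNReal.ofReal (B / (p - 1) * T ^ (1 - p)) := by
      rw [lintegral_const_mul' _ _ ENNReal.ofReal_ne_top, lintegral_Ioi_ofReal_rpow_neg hp hT_pos,
        ← ENNReal.ofReal_mul hB, mul_div_left_comm, mul_comm]
    _ = _ := by
      have h_exp : -p⁻¹ * (1 - p) = 1 - p⁻¹ := by field_simp; ring
      rw [hT, ← Real.rpow_mul ha.le, h_exp]
  have : 0 < p - 1 := sub_pos.2 hp
  rw [← Set.Ioc_union_Ioi_eq_Ioi hT_pos.le]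
  calc _ ≤ _ := (lintegral_union_le _ _ _).trans (add_le_add h_low h_high)
    _ = _ := by
      rw [← ENNReal.ofReal_add (by positivity) (by positivity), ENNReal.ofReal_rpow_of_pos ha,
        ← ENNReal.ofReal_mul (by positivity), add_mul, one_mul]

theorem setLIntegral_ofReal_le_of_meas_lt_le_rpow_neg {k : α → ℝ} (hk : AEMeasurable k μ)
    (hk_nonneg : 0 ≤ k) {B p : ℝ} (hB : 0 ≤ B) (hp : 1 < p)
    (h_weak : ∀ t, 0 < t → μ {x | t < k x} ≤ ENNReal.ofReal (B * t ^ (-p))) (A : Set α) :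
    ∫⁻ x in A, ENNReal.ofReal (k x) ∂μ ≤ ENNReal.ofReal (1 + B / (p - 1)) * μ A ^ (1 - p⁻¹) := by
  have : 0 < p - 1 := sub_pos.2 hp
  have hq : 0 < 1 - p⁻¹ := sub_pos.2 (inv_lt_one_of_one_lt₀ hp)
  rcases eq_or_ne (μ A) 0 with h_zero | h_zero
  · rw [setLIntegral_measure_zero _ _ h_zero]; exact zero_le
  rcases eq_or_ne (μ A) ⊤ with h_top | h_top
  · have h_const : ENNReal.ofReal (1 + B / (p - 1)) ≠ 0 :=
      (ENNReal.ofReal_pos.2 (by positivity)).ne'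
    rw [h_top, ENNReal.top_rpow_of_pos hq, ENNReal.mul_top h_const]; exact le_top
  rw [lintegral_eq_lintegral_meas_lt _ (.of_forall hk_nonneg) hk.restrict,
    ← ENNReal.ofReal_toReal h_top]
  refine lintegral_Ioi_le_of_le_const_of_le_rpow_neg (ENNReal.toReal_pos h_zero h_top) hB hp
    (fun t => ?_) fun t ht => (Measure.restrict_apply_le _ _).trans (h_weak t ht)
  rw [ENNReal.ofReal_toReal h_top]
  exact (measure_mono (Set.subset_univ _)).trans_eq (Measure.restrict_apply_univ A)

theorem lintegral_mul_enorm_le_lorentzIntegral [NormedAddCommGroup E] {K : α → ℝ≥0∞}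
    (hK : AEMeasurable K μ) {C : ℝ≥0∞} (hC : C ≠ ⊤) {q : ℝ}
    (h_set : ∀ A, ∫⁻ x in A, K x ∂μ ≤ C * μ A ^ q) {f : α → E} (hf : AEStronglyMeasurable f μ) :
    ∫⁻ x, K x * ‖f x‖ₑ ∂μ ≤ C * lorentzIntegral q f μ := by
  have h_ac : μ.withDensity K ≪ μ := withDensity_absolutelyContinuous μ K
  calc ∫⁻ x, K x * ‖f x‖ₑ ∂μ
      = ∫⁻ x, ENNReal.ofReal ‖f x‖ ∂μ.withDensity K := by
        rw [lintegral_withDensity_eq_lintegral_mul₀ hK hf.norm.aemeasurable.ennreal_ofReal]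
        simp only [ofReal_norm, Pi.mul_apply]
    _ = ∫⁻ l in Set.Ioi 0, μ.withDensity K {x | l < ‖f x‖} :=
        lintegral_eq_lintegral_meas_lt _ (.of_forall fun _ => norm_nonneg _)
          (hf.norm.aemeasurable.mono_ac h_ac)
    _ ≤ ∫⁻ l in Set.Ioi 0, C * μ {x | l < ‖f x‖} ^ q := by
        refine lintegral_mono fun l => ?_
        rw [withDensity_apply₀ _ (nullMeasurableSet_lt aemeasurable_const hf.norm.aemeasurable)]
        exact h_set _
    _ = C * lorentzIntegral q f μ := lintegral_const_mul' _ _ hC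

end LayerCake

section RieszKernel

variable {α E : Type*} [PseudoMetricSpace α] [MeasurableSpace α] {μ : Measure α} {V d γ : ℝ} {z : α}

theorem meas_lt_dist_rpow_neg_le (hγ : 0 < γ)
    (h_growth : ∀ R, 0 < R → μ (Metric.closedBall z R) ≤ ENNReal.ofReal (V * R ^ d)) {t : ℝ}
    (ht : 0 < t) :
    μ {y | t < dist y z ^ (-γ)} ≤ ENNReal.ofReal (V * t ^ (-(d / γ))) := by
  set R : ℝ := t ^ (-γ⁻¹) with hR
  have hR_pos : 0 < R := Real.rpow_pos_of_pos ht _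
  have hR_rpow (u : ℝ) : R ^ u = t ^ (-(u / γ)) := by
    rw [hR, ← Real.rpow_mul ht.le, neg_mul, inv_mul_eq_div]
  have h_sub : {y | t < dist y z ^ (-γ)} ⊆ Metric.closedBall z R := by
    intro y (hy : t < dist y z ^ (-γ))
    by_contra! h_far
    rw [Metric.mem_closedBall, not_le] at h_far
    refine hy.not_ge ?_
    calc dist y z ^ (-γ) ≤ R ^ (-γ) :=
          Real.rpow_le_rpow_of_nonpos hR_pos h_far.le (neg_nonpos.2 hγ.le)
      _ = t := by rw [hR_rpow, neg_div, neg_neg, div_self hγ.ne', Real.rpow_one]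
  calc _ ≤ ENNReal.ofReal (V * R ^ d) := (measure_mono h_sub).trans (h_growth R hR_pos)
    _ = _ := by rw [hR_rpow]

theorem lintegral_dist_rpow_neg_mul_enorm_le_lorentzIntegral [OpensMeasurableSpace α]
    [NormedAddCommGroup E] (hV : 0 ≤ V) (hγ : 0 < γ) (hγd : γ < d)
    (h_growth : ∀ R, 0 < R → μ (Metric.closedBall z R) ≤ ENNReal.ofReal (V * R ^ d)) {f : α → E}
    (hf : AEStronglyMeasurable f μ) :
    ∫⁻ y, ENNReal.ofReal (dist y z ^ (-γ)) * ‖f y‖ₑ ∂μ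
      ≤ ENNReal.ofReal (1 + V / (d / γ - 1)) * lorentzIntegral (1 - γ / d) f μ := by
  have hk : Measurable fun y => dist y z ^ (-γ) :=
    (continuous_id.dist continuous_const).measurable.pow_const _
  have h_set := setLIntegral_ofReal_le_of_meas_lt_le_rpow_neg hk.aemeasurable
    (fun _ => Real.rpow_nonneg dist_nonneg _) hV ((one_lt_div hγ).2 hγd)
    fun t ht => meas_lt_dist_rpow_neg_le hγ h_growth ht
  rw [inv_div] at h_set
  exact lintegral_mul_enorm_le_lorentzIntegral hk.ennreal_ofReal.aemeasurable
    ENNReal.ofReal_ne_top h_set hf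

end RieszKernel

section ComplexPlane

theorem volume_closedBall_complex_prod (z : ℂ × ℂ) {R : ℝ} (hR : 0 ≤ R) :
    volume (Metric.closedBall z R) = ENNReal.ofReal (π ^ 2 * R ^ 4) := by
  have h_disc (a : ℂ) : volume (Metric.closedBall a R) = ENNReal.ofReal (π * R ^ 2) := by
    rw [Complex.volume_closedBall, ← ENNReal.ofReal_pow hR, mul_comm,
      ENNReal.ofReal_mul Real.pi_pos.le, ← ENNReal.ofReal_coe_nnreal, NNReal.coe_real_pi]
  rw [← closedBall_prod_same, Measure.volume_eq_prod, Measure.prod_prod, h_disc, h_disc,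
    ← ENNReal.ofReal_mul (by positivity)]
  ring_nf

theorem measurePreserving_complex_prod_fin_four :
    MeasurePreserving fun z : ℂ × ℂ => (![z.1.re, z.1.im, z.2.re, z.2.im] : Fin 4 → ℝ) := by
  have h_meas : Measurable fun z : ℂ × ℂ => (![z.1.re, z.1.im, z.2.re, z.2.im] : Fin 4 → ℝ) := by
    refine measurable_pi_iff.2 fun i => ?_
    fin_cases i <;> dsimp <;> fun_prop
  refine ⟨h_meas, (Measure.pi_eq fun S hS => ?_).symm⟩
  have h_rect {A B : Set ℝ} (hA : MeasurableSet A) (hB : MeasurableSet B) :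
      volume (A ×ℂ B) = volume A * volume B := by
    rw [← Measure.prod_prod, ← Measure.volume_eq_prod,
      ← Complex.volume_preserving_equiv_real_prod.measure_preimage (hA.prod hB).nullMeasurableSet]
    rfl
  have h_preimage : (fun z : ℂ × ℂ => (![z.1.re, z.1.im, z.2.re, z.2.im] : Fin 4 → ℝ)) ⁻¹'
      Set.univ.pi S = (S 0 ×ℂ S 1) ×ˢ (S 2 ×ℂ S 3) := by
    ext z
    simp [Fin.forall_fin_succ, and_assoc, Complex.mem_reProdIm]
  rw [Measure.map_apply h_meas (MeasurableSet.univ_pi hS), h_preimage, Measure.volume_eq_prod,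
    Measure.prod_prod, h_rect (hS 0) (hS 1), h_rect (hS 2) (hS 3), Fin.prod_univ_four,
    mul_assoc (_ * _)]

theorem Lam_comp_radii {h : ℝ × ℝ → ℝ} (hh : Measurable h) :
    Lam (fun x => h (rx x, sx x)) =
      lorentzIntegral (1 / 4) (fun z : ℂ × ℂ => h (‖z.1‖, ‖z.2‖)) volume := by
  have h_meas : Measurable fun x : Fin 4 → ℝ => h (rx x, sx x) := by unfold rx sx; fun_prop
  have h_comp := lorentzIntegral_comp_measurePreserving measurePreserving_complex_prod_fin_four
    h_meas.aestronglyMeasurable (1 / 4)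
  simp only [Complex.norm_eq_sqrt_sq_add_sq]
  exact h_comp.symm

theorem Lam_comp_radii_swap {h : ℝ × ℝ → ℝ} (hh : Measurable h) :
    Lam (fun x => h (sx x, rx x)) = Lam (fun x => h (rx x, sx x)) := by
  have h_meas : Measurable fun z : ℂ × ℂ => h (‖z.1‖, ‖z.2‖) := by fun_prop
  have h_swap : MeasurePreserving (Prod.swap : ℂ × ℂ → ℂ × ℂ) := Measure.measurePreserving_swap
  calc _ = lorentzIntegral (1 / 4) (fun z : ℂ × ℂ => h (‖z.2‖, ‖z.1‖)) volume :=
        Lam_comp_radii (hh.comp measurable_swap)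
    _ = lorentzIntegral (1 / 4) (fun z : ℂ × ℂ => h (‖z.1‖, ‖z.2‖)) volume :=
        lorentzIntegral_comp_measurePreserving h_swap h_meas.aestronglyMeasurable _
    _ = _ := (Lam_comp_radii hh).symm

theorem measurable_complex_polarCoord_symm : Measurable Complex.polarCoord.symm := by
  simp_rw [funext Complex.polarCoord_symm_apply]
  fun_prop

theorem lintegral_Ioi_mul_lintegral_polarCoord_symm_le {f : ℂ → ℝ≥0∞} (hf : Measurable f) :
    ∫⁻ a in Set.Ioi 0, ENNReal.ofReal a * ∫⁻ θ in Set.Ioc 0 π, f (Complex.polarCoord.symm (a, θ))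
      ≤ ∫⁻ z, f z := by
  have hf_polar : Measurable fun p => f (Complex.polarCoord.symm p) :=
    hf.comp measurable_complex_polarCoord_symm
  calc _ ≤ ∫⁻ a in Set.Ioi 0, ∫⁻ θ in Set.Ioo (-π) π,
        ENNReal.ofReal a * f (Complex.polarCoord.symm (a, θ)) := by
        simp only [lintegral_const_mul' _ _ ENNReal.ofReal_ne_top, ← restrict_Ioo_eq_restrict_Ioc]
        gcongr
        exact neg_nonpos.2 Real.pi_pos.le
    _ = ∫⁻ z, f z := by
        rw [← Complex.lintegral_comp_polarCoord_symm, _root_.polarCoord_target,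
          Measure.volume_eq_prod, ← Measure.prod_restrict]
        simp only [smul_eq_mul]
        exact (lintegral_prod _ (measurable_fst.ennreal_ofReal.mul hf_polar).aemeasurable).symm

theorem lintegral_mul_lintegral_swap {α β : Type*} [MeasurableSpace α] [MeasurableSpace β]
    {μ : Measure α} {ν : Measure β} [SFinite μ] [SFinite ν] {c : α → ℝ≥0∞} (hc : Measurable c)
    {F : α → β → ℝ≥0∞} (hF : Measurable (Function.uncurry F)) :
    ∫⁻ a, c a * ∫⁻ b, F a b ∂ν ∂μ = ∫⁻ b, ∫⁻ a, c a * F a b ∂μ ∂ν := by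
  simp only [← lintegral_const_mul _ hF.of_uncurry_left]
  exact lintegral_lintegral_swap ((hc.comp measurable_fst).mul hF).aemeasurable

theorem lintegral_quadrant_lintegral_polarCoord_symm_le {g : ℂ × ℂ → ℝ≥0∞} (hg : Measurable g) :
    ∫⁻ p in quadrant, ENNReal.ofReal p.1 * (ENNReal.ofReal p.2 *
        ∫⁻ θ in Set.Ioc 0 π, ∫⁻ φ in Set.Ioc 0 π,
          g (Complex.polarCoord.symm (p.1, θ), Complex.polarCoord.symm (p.2, φ)))
      ≤ ∫⁻ z, g z := by
  have h_polar := measurable_complex_polarCoord_symm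
  calc _ ≤ ∫⁻ a in Set.Ioi 0, ENNReal.ofReal a * ∫⁻ b in Set.Ioi 0, ENNReal.ofReal b *
        ∫⁻ θ in Set.Ioc 0 π, ∫⁻ φ in Set.Ioc 0 π,
          g (Complex.polarCoord.symm (a, θ), Complex.polarCoord.symm (b, φ)) := by
        rw [quadrant, Measure.volume_eq_prod, ← Measure.prod_restrict,
          ← restrict_Ioi_eq_restrict_Ici]
        simp only [← lintegral_const_mul' _ _ ENNReal.ofReal_ne_top]
        exact lintegral_prod_le _
    _ = ∫⁻ a in Set.Ioi 0, ENNReal.ofReal a * ∫⁻ θ in Set.Ioc 0 π, ∫⁻ b in Set.Ioi 0,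
        ENNReal.ofReal b * ∫⁻ φ in Set.Ioc 0 π,
          g (Complex.polarCoord.symm (a, θ), Complex.polarCoord.symm (b, φ)) := by
        congr! 3 with a
        exact lintegral_mul_lintegral_swap ENNReal.measurable_ofReal <|
          Measurable.lintegral_prod_right' (f := fun x : (ℝ × ℝ) × ℝ =>
            g (Complex.polarCoord.symm (a, x.1.2), Complex.polarCoord.symm (x.1.1, x.2)))
            (by fun_prop)
    _ ≤ ∫⁻ a in Set.Ioi 0, ENNReal.ofReal a * ∫⁻ θ in Set.Ioc 0 π,
        ∫⁻ z₂, g (Complex.polarCoord.symm (a, θ), z₂) := by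
        gcongr
        exact lintegral_Ioi_mul_lintegral_polarCoord_symm_le (by fun_prop)
    _ ≤ ∫⁻ z₁, ∫⁻ z₂, g (z₁, z₂) :=
        lintegral_Ioi_mul_lintegral_polarCoord_symm_le hg.lintegral_prod_right'
    _ = ∫⁻ z, g z := (lintegral_prod _ hg.aemeasurable).symm

end ComplexPlane

section Kernel

theorem norm_polarCoord_symm_sub_sq (b θ a : ℝ) :
    ‖Complex.polarCoord.symm (b, θ) - a‖ ^ 2 = (a - b) ^ 2 + 2 * a * b * (1 - Real.cos θ) := by
  rw [Complex.sq_norm, Complex.normSq_apply, Complex.polarCoord_symm_apply]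
  simp only [Complex.sub_re, Complex.sub_im, Complex.re_ofReal_mul, Complex.im_ofReal_mul,
    Complex.add_re, Complex.add_im, Complex.mul_I_re, Complex.mul_I_im, Complex.ofReal_re,
    Complex.ofReal_im]
  linear_combination b ^ 2 * Real.sin_sq_add_cos_sq θ

variable {r s rb sb : ℝ}

theorem Xmm_eq_norm_sq_add_norm_sq (r s rb sb θ φ : ℝ) :
    Xmm r s rb sb θ φ =
      ‖Complex.polarCoord.symm (rb, θ) - r‖ ^ 2 + ‖Complex.polarCoord.symm (sb, φ) - s‖ ^ 2 := by
  rw [norm_polarCoord_symm_sub_sq, norm_polarCoord_symm_sub_sq, Xmm]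
  ring

theorem Xmm_nonneg (r s rb sb θ φ : ℝ) : 0 ≤ Xmm r s rb sb θ φ := by
  rw [Xmm_eq_norm_sq_add_norm_sq]
  positivity

theorem sub_sq_le_Xmm (hr : 0 ≤ r) (hrb : 0 ≤ rb) (s sb θ φ : ℝ) :
    (r - rb) ^ 2 ≤ Xmm r s rb sb θ φ := by
  have h_cos : 0 ≤ 1 - Real.cos θ := sub_nonneg.2 (Real.cos_le_one θ)
  rw [Xmm_eq_norm_sq_add_norm_sq, norm_polarCoord_symm_sub_sq, add_assoc]
  exact le_add_of_nonneg_right (by positivity)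

theorem abs_sub_mul_cos_le_sqrt_Xmm (r s rb sb θ φ : ℝ) :
    |sb - s * Real.cos φ| ≤ √(Xmm r s rb sb θ φ) := by
  apply Real.abs_le_sqrt
  calc (sb - s * Real.cos φ) ^ 2
      ≤ (sb - s * Real.cos φ) ^ 2 + s ^ 2 * Real.sin φ ^ 2 := le_add_of_nonneg_right (by positivity)
    _ = ‖Complex.polarCoord.symm (sb, φ) - s‖ ^ 2 := by
        rw [norm_polarCoord_symm_sub_sq]
        linear_combination s ^ 2 * Real.sin_sq_add_cos_sq φ
    _ ≤ Xmm r s rb sb θ φ := by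
        rw [Xmm_eq_norm_sq_add_norm_sq]
        exact le_add_of_nonneg_left (sq_nonneg _)

theorem dist_polarCoord_symm_sq_le_Xmm (r s rb sb θ φ : ℝ) :
    dist (Complex.polarCoord.symm (rb, θ), Complex.polarCoord.symm (sb, φ)) ((r, s) : ℂ × ℂ) ^ 2
      ≤ Xmm r s rb sb θ φ := by
  rw [Xmm_eq_norm_sq_add_norm_sq, Prod.dist_eq, dist_eq_norm, dist_eq_norm]
  rcases max_choice ‖Complex.polarCoord.symm (rb, θ) - r‖ ‖Complex.polarCoord.symm (sb, φ) - s‖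
    with h | h
  · rw [h]; exact le_add_of_nonneg_right (sq_nonneg _)
  · rw [h]; exact le_add_of_nonneg_left (sq_nonneg _)

theorem Xmm_rpow_neg_le_dist_rpow_neg (r s rb sb θ φ : ℝ) {γ : ℝ} (hγ : 0 ≤ γ) :
    Xmm r s rb sb θ φ ^ (-(γ / 2)) ≤
      dist (Complex.polarCoord.symm (rb, θ), Complex.polarCoord.symm (sb, φ))
        ((r, s) : ℂ × ℂ) ^ (-γ) := by
  set D := dist (Complex.polarCoord.symm (rb, θ), Complex.polarCoord.symm (sb, φ)) ((r, s) : ℂ × ℂ)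
    with hD
  have hD_nonneg : 0 ≤ D := dist_nonneg
  rcases hD_nonneg.eq_or_lt with h_zero | h_pos
  · have hX : Xmm r s rb sb θ φ = 0 := by
      obtain ⟨h₁, h₂⟩ := Prod.mk.inj (dist_eq_zero.1 (hD ▸ h_zero.symm))
      rw [Xmm_eq_norm_sq_add_norm_sq, h₁, h₂]
      simp
    rw [hX, ← h_zero]
    rcases hγ.eq_or_lt with rfl | hγ_pos
    · simp
    · rw [Real.zero_rpow (by linarith), Real.zero_rpow (by linarith)]
  · calc Xmm r s rb sb θ φ ^ (-(γ / 2)) ≤ (D ^ 2) ^ (-(γ / 2)) :=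
          Real.rpow_le_rpow_of_nonpos (by positivity) (dist_polarCoord_symm_sq_le_Xmm ..)
            (by linarith)
      _ = D ^ (-γ) := by
          rw [← Real.rpow_natCast, ← Real.rpow_mul h_pos.le]
          ring_nf

/-- The integrand of the kernel `Fr` without its factor `cos θ`, which is kept apart because its
integral over `[0, π]` vanishes. -/
noncomputable def angularKernel (r s rb sb θ φ : ℝ) : ℝ :=
  rb * sb * (sb - s * Real.cos φ) / Xmm r s rb sb θ φ ^ 2

theorem Fr_eq_integral_cos_mul_angularKernel (r s rb sb : ℝ) :
    Fr r s rb sb = 2 / π ^ 2 * ∫ θ in (0 : ℝ)..π, ∫ φ in (0 : ℝ)..π,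
      Real.cos θ * angularKernel r s rb sb θ φ := by
  simp only [Fr, angularKernel, ← mul_div_assoc, mul_left_comm (Real.cos _), mul_assoc]

theorem sqrt_mul_inv_sq {x : ℝ} (hx : 0 ≤ x) : √x * (x ^ 2)⁻¹ = x ^ (-(3 / 2) : ℝ) := by
  rcases hx.eq_or_lt with rfl | hx_pos
  · simp [Real.zero_rpow]
  · rw [Real.sqrt_eq_rpow, ← Real.rpow_natCast, ← Real.rpow_neg hx, ← Real.rpow_add hx_pos]
    norm_num

theorem abs_inv_sq_sub_inv_sq_le {x y : ℝ} (hx : 0 < x) (hxy : x ≤ 2 * y) :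
    |(x ^ 2)⁻¹ - (y ^ 2)⁻¹| ≤ 6 * |y - x| * (x ^ 3)⁻¹ := by
  have hy : 0 < y := by linarith
  have hy_inv : y⁻¹ ≤ 2 * x⁻¹ := by
    rw [← div_eq_mul_inv, inv_le_iff_one_le_mul₀ hy, div_mul_eq_mul_div, one_le_div hx]
    exact hxy
  calc |(x ^ 2)⁻¹ - (y ^ 2)⁻¹|
      = |y - x| * ((x ^ 2)⁻¹ * y⁻¹ + x⁻¹ * y⁻¹ ^ 2) := by
        rw [← abs_of_pos (by positivity : 0 < (x ^ 2)⁻¹ * y⁻¹ + x⁻¹ * y⁻¹ ^ 2), ← abs_mul]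
        congr 1
        field_simp
        ring
    _ ≤ |y - x| * ((x ^ 2)⁻¹ * (2 * x⁻¹) + x⁻¹ * (2 * x⁻¹) ^ 2) := by gcongr
    _ = 6 * |y - x| * (x ^ 3)⁻¹ := by ring

theorem abs_angularKernel_le (hrb : 0 ≤ rb) (hsb : 0 ≤ sb) (r s θ φ : ℝ) :
    |angularKernel r s rb sb θ φ| ≤ rb * sb * Xmm r s rb sb θ φ ^ (-(3 / 2) : ℝ) := by
  rw [angularKernel, abs_div, abs_mul, abs_of_nonneg (mul_nonneg hrb hsb),
    abs_of_nonneg (sq_nonneg (Xmm r s rb sb θ φ)), ← sqrt_mul_inv_sq (Xmm_nonneg ..),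
    div_eq_mul_inv, mul_assoc]
  gcongr
  exact abs_sub_mul_cos_le_sqrt_Xmm ..

theorem Xmm_le_two_mul_Xmm_pi_div_two (r s rb sb θ φ : ℝ) :
    Xmm r s rb sb θ φ ≤ 2 * Xmm r s rb sb (π / 2) φ := by
  have h_identity : 2 * Xmm r s rb sb (π / 2) φ - Xmm r s rb sb θ φ =
      (r + rb * Real.cos θ) ^ 2 + (rb * Real.sin θ) ^ 2 +
        ‖Complex.polarCoord.symm (sb, φ) - s‖ ^ 2 := by
    simp only [Xmm_eq_norm_sq_add_norm_sq, norm_polarCoord_symm_sub_sq, Real.cos_pi_div_two]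
    linear_combination -rb ^ 2 * Real.sin_sq_add_cos_sq θ
  rw [← sub_nonneg, h_identity]
  positivity

theorem abs_angularKernel_sub_le (hr : 0 ≤ r) (hsb : 0 ≤ sb) (h_far : 2 * r < rb) (s θ φ : ℝ) :
    |angularKernel r s rb sb θ φ - angularKernel r s rb sb (π / 2) φ|
      ≤ 48 * r * sb * Xmm r s rb sb θ φ ^ (-(3 / 2) : ℝ) := by
  have hrb : 0 < rb := by linarith
  have hX_far : rb ^ 2 ≤ 4 * Xmm r s rb sb θ φ := by
    nlinarith [sub_sq_le_Xmm hr hrb.le s sb θ φ]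
  have h_diff : |Xmm r s rb sb (π / 2) φ - Xmm r s rb sb θ φ| ≤ 2 * r * rb := by
    have h_eq : Xmm r s rb sb (π / 2) φ - Xmm r s rb sb θ φ = 2 * r * rb * Real.cos θ := by
      rw [Xmm, Xmm, Real.cos_pi_div_two]
      ring
    rw [h_eq, abs_mul, abs_of_nonneg (by positivity)]
    exact mul_le_of_le_one_right (by positivity) (Real.abs_cos_le_one θ)
  have h_double := Xmm_le_two_mul_Xmm_pi_div_two r s rb sb θ φ
  have h_num := abs_sub_mul_cos_le_sqrt_Xmm r s rb sb θ φ
  rw [← sqrt_mul_inv_sq (Xmm_nonneg ..), angularKernel, angularKernel]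
  generalize Xmm r s rb sb θ φ = X at *
  generalize Xmm r s rb sb (π / 2) φ = Y at *
  have hX : 0 < X := by nlinarith
  calc |rb * sb * (sb - s * Real.cos φ) / X ^ 2 - rb * sb * (sb - s * Real.cos φ) / Y ^ 2|
      = rb * sb * |sb - s * Real.cos φ| * |(X ^ 2)⁻¹ - (Y ^ 2)⁻¹| := by
        rw [div_eq_mul_inv, div_eq_mul_inv, ← mul_sub, abs_mul, abs_mul,
          abs_of_nonneg (mul_nonneg hrb.le hsb)]
    _ ≤ rb * sb * √X * (6 * (2 * r * rb) * (X ^ 3)⁻¹) := by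
        gcongr
        exact (abs_inv_sq_sub_inv_sq_le hX h_double).trans (by gcongr)
    _ = 12 * r * sb * √X * (X ^ 3)⁻¹ * rb ^ 2 := by ring
    _ ≤ 12 * r * sb * √X * (X ^ 3)⁻¹ * (4 * X) := by gcongr
    _ = 48 * r * sb * (√X * (X ^ 2)⁻¹) := by field_simp; ring

theorem continuous_angularKernel (hr : 0 ≤ r) (hrb : 0 ≤ rb) (h_ne : r ≠ rb) (s sb : ℝ) :
    Continuous (Function.uncurry (angularKernel r s rb sb)) := by
  have hX_cont : Continuous fun x : ℝ × ℝ => Xmm r s rb sb x.1 x.2 := by unfold Xmm; fun_prop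
  refine Continuous.div (by fun_prop) (hX_cont.pow 2) fun x => pow_ne_zero 2 ?_
  exact ((sq_pos_of_ne_zero (sub_ne_zero.2 h_ne)).trans_le (sub_sq_le_Xmm hr hrb ..)).ne'

theorem integral_cos_mul_integral_sub {h : ℝ → ℝ → ℝ} {g : ℝ → ℝ}
    (hh : Continuous (Function.uncurry h)) (hg : Continuous g) (a b : ℝ) :
    ∫ θ in (0 : ℝ)..π, ∫ φ in a..b, Real.cos θ * (h θ φ - g φ) =
      ∫ θ in (0 : ℝ)..π, ∫ φ in a..b, Real.cos θ * h θ φ := by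
  have h_sub (θ : ℝ) : ∫ φ in a..b, Real.cos θ * (h θ φ - g φ) =
      (∫ φ in a..b, Real.cos θ * h θ φ) - Real.cos θ * ∫ φ in a..b, g φ := by
    have hhθ : Continuous (h θ) := hh.comp (Continuous.prodMk_right θ)
    rw [intervalIntegral.integral_const_mul, intervalIntegral.integral_const_mul,
      intervalIntegral.integral_sub
        (hhθ.intervalIntegrable _ _) (hg.intervalIntegrable _ _),
      mul_sub]
  have h_cont : Continuous fun θ => ∫ φ in a..b, Real.cos θ * h θ φ :=
    intervalIntegral.continuous_parametric_intervalIntegral_of_continuous'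
      ((Real.continuous_cos.comp continuous_fst).mul hh) _ _
  have hg_cont : Continuous fun θ => Real.cos θ * ∫ φ in a..b, g φ := by fun_prop
  simp only [h_sub]
  rw [intervalIntegral.integral_sub (h_cont.intervalIntegrable _ _)
      (hg_cont.intervalIntegrable _ _),
    intervalIntegral.integral_mul_const, integral_cos, Real.sin_pi, Real.sin_zero, sub_zero,
    zero_mul, sub_zero]

theorem enorm_integral_integral_le {G H : ℝ → ℝ → ℝ} {a b c d : ℝ} (hab : a ≤ b) (hcd : c ≤ d)
    (h_le : ∀ θ φ, |G θ φ| ≤ H θ φ) :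
    ‖∫ θ in a..b, ∫ φ in c..d, G θ φ‖ₑ
      ≤ ∫⁻ θ in Set.Ioc a b, ∫⁻ φ in Set.Ioc c d, ENNReal.ofReal (H θ φ) := by
  simp only [intervalIntegral.integral_of_le hab, intervalIntegral.integral_of_le hcd]
  refine (enorm_integral_le_lintegral_enorm _).trans (lintegral_mono fun θ => ?_)
  refine (enorm_integral_le_lintegral_enorm _).trans (lintegral_mono fun φ => ?_)
  rw [Real.enorm_eq_ofReal_abs]
  exact ENNReal.ofReal_le_ofReal (h_le θ φ)

theorem enorm_Fr_le_lintegral_Xmm (hr : 0 ≤ r) (hrb : 0 ≤ rb) (hsb : 0 ≤ sb) (s : ℝ) :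
    ‖Fr r s rb sb‖ₑ ≤ ∫⁻ θ in Set.Ioc 0 π, ∫⁻ φ in Set.Ioc 0 π,
      ENNReal.ofReal (48 * r * sb * Xmm r s rb sb θ φ ^ (-(3 / 2) : ℝ)) := by
  have h_const : ‖2 / π ^ 2‖ₑ ≤ 1 := by
    rw [Real.enorm_of_nonneg (by positivity), ENNReal.ofReal_le_one, div_le_one (by positivity)]
    nlinarith [Real.pi_gt_three]
  have h_cos_mul (θ u : ℝ) : |Real.cos θ * u| ≤ |u| := by
    rw [abs_mul]
    exact mul_le_of_le_one_left (abs_nonneg u) (Real.abs_cos_le_one θ)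
  have h_pi : 0 ≤ π := Real.pi_pos.le
  rw [Fr_eq_integral_cos_mul_angularKernel, enorm_mul]
  refine (mul_le_of_le_one_left' h_const).trans ?_
  rcases le_or_gt rb (2 * r) with h_near | h_far
  · refine enorm_integral_integral_le h_pi h_pi fun θ φ => (h_cos_mul θ _).trans <|
      (abs_angularKernel_le hrb hsb r s θ φ).trans ?_
    have h_rpow := Real.rpow_nonneg (Xmm_nonneg r s rb sb θ φ) (-(3 / 2))
    gcongr
    linarith
  · -- The value at `θ = π / 2` averages to zero against `cos θ`; subtracting it gains `r / rb`.
    have h_cont := continuous_angularKernel hr hrb (by linarith : r < rb).ne s sb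
    rw [← integral_cos_mul_integral_sub h_cont (h_cont.comp (Continuous.prodMk_right (π / 2)))]
    exact enorm_integral_integral_le h_pi h_pi fun θ φ =>
      (h_cos_mul θ _).trans (abs_angularKernel_sub_le hr hsb h_far s θ φ)

theorem enorm_Fr_le_lintegral_dist (hr : 0 ≤ r) (hrb : 0 ≤ rb) (hsb : 0 ≤ sb) (s : ℝ) :
    ‖Fr r s rb sb‖ₑ ≤ ENNReal.ofReal (48 * r) * (ENNReal.ofReal sb *
      ∫⁻ θ in Set.Ioc 0 π, ∫⁻ φ in Set.Ioc 0 π,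
        ENNReal.ofReal (dist (Complex.polarCoord.symm (rb, θ), Complex.polarCoord.symm (sb, φ))
          ((r, s) : ℂ × ℂ) ^ (-3 : ℝ))) := by
  refine (enorm_Fr_le_lintegral_Xmm hr hrb hsb s).trans ?_
  rw [← mul_assoc, ← ENNReal.ofReal_mul (by positivity)]
  simp only [← lintegral_const_mul' _ _ ENNReal.ofReal_ne_top]
  gcongr with θ φ
  rw [← ENNReal.ofReal_mul (by positivity)]
  gcongr
  exact Xmm_rpow_neg_le_dist_rpow_neg r s rb sb θ φ zero_le_three

end Kernel

section Velocity

theorem lintegral_enorm_Fr_mul_le {w : ℝ × ℝ → ℝ} (hw : Measurable w) {r : ℝ} (hr : 0 ≤ r)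
    (s : ℝ) :
    ∫⁻ p in quadrant, ‖Fr r s p.1 p.2‖ₑ * ‖w p‖ₑ ≤ ENNReal.ofReal (48 * r) *
      ∫⁻ z : ℂ × ℂ, ENNReal.ofReal (dist z (r, s) ^ (-3 : ℝ)) * ‖w (‖z.1‖, ‖z.2‖) / ‖z.1‖‖ₑ := by
  set g : ℂ × ℂ → ℝ≥0∞ := fun z =>
    ENNReal.ofReal (dist z (r, s) ^ (-3 : ℝ)) * ‖w (‖z.1‖, ‖z.2‖) / ‖z.1‖‖ₑ with hg
  have hg_meas : Measurable g := by fun_prop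
  refine le_trans ?_ (mul_le_mul_right (lintegral_quadrant_lintegral_polarCoord_symm_le hg_meas) _)
  rw [← lintegral_const_mul' _ _ ENNReal.ofReal_ne_top]
  refine setLIntegral_mono' (measurableSet_Ici.prod measurableSet_Ici) ?_
  rintro ⟨a, b⟩ ⟨ha : 0 ≤ a, hb : 0 ≤ b⟩
  rcases ha.eq_or_lt with rfl | ha_pos
  · simp [Fr]
  have h_weight : ‖w (a, b)‖ₑ = ENNReal.ofReal a * ‖w (a, b) / a‖ₑ := by
    rw [← Real.enorm_of_nonneg ha, ← enorm_mul, mul_div_cancel₀ _ ha_pos.ne']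
  simp only [hg, Complex.norm_polarCoord_symm, abs_of_nonneg ha, abs_of_nonneg hb,
    lintegral_mul_const' _ _ enorm_ne_top]
  calc _ ≤ _ := mul_le_mul_left (enorm_Fr_le_lintegral_dist hr ha hb s) _
    _ = _ := by rw [h_weight]; ring

theorem lintegral_Fr_mul_le_Lam {w : ℝ × ℝ → ℝ} (hw : Measurable w) {r : ℝ} (hr : 0 ≤ r)
    (s : ℝ) :
    ∫⁻ p in quadrant, ENNReal.ofReal (|Fr r s p.1 p.2| * |w p|)
      ≤ ENNReal.ofReal (48 * (1 + 3 * π ^ 2) * r) * Lam (fun x => w (rx x, sx x) / rx x) := by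
  have h_growth (R : ℝ) (hR : 0 < R) : volume (Metric.closedBall ((r, s) : ℂ × ℂ) R) ≤
      ENNReal.ofReal (π ^ 2 * R ^ (4 : ℝ)) := by
    rw [volume_closedBall_complex_prod _ hR.le]
    norm_cast
  have h_meas : Measurable fun z : ℂ × ℂ => w (‖z.1‖, ‖z.2‖) / ‖z.1‖ := by fun_prop
  have h_riesz := lintegral_dist_rpow_neg_mul_enorm_le_lorentzIntegral (sq_nonneg π)
    (by norm_num : (0 : ℝ) < 3) (by norm_num) h_growth h_meas.aestronglyMeasurable
  rw [Lam_comp_radii (h := fun p => w p / p.1) (by fun_prop)]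
  calc _ = ∫⁻ p in quadrant, ‖Fr r s p.1 p.2‖ₑ * ‖w p‖ₑ := by
        simp only [ENNReal.ofReal_mul (abs_nonneg _), Real.enorm_eq_ofReal_abs]
    _ ≤ _ := (lintegral_enorm_Fr_mul_le hw hr s).trans (mul_le_mul_right h_riesz _)
    _ = _ := by
        rw [← mul_assoc, ← ENNReal.ofReal_mul (by positivity)]
        ring_nf

theorem lintegral_Fs_mul_le_Lam {w : ℝ × ℝ → ℝ} (hw : Measurable w) (r : ℝ) {s : ℝ}
    (hs : 0 ≤ s) :
    ∫⁻ p in quadrant, ENNReal.ofReal (|Fs r s p.1 p.2| * |w p|)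
      ≤ ENNReal.ofReal (48 * (1 + 3 * π ^ 2) * s) * Lam (fun x => w (rx x, sx x) / sx x) := by
  have h_swap : MeasurePreserving (Prod.swap : ℝ × ℝ → ℝ × ℝ) := Measure.measurePreserving_swap
  calc _ = ∫⁻ p in quadrant, ENNReal.ofReal (|Fr s r p.1 p.2| * |w p.swap|) := by
        rw [← h_swap.setLIntegral_comp_preimage_emb MeasurableEquiv.prodComm.measurableEmbedding,
          quadrant, Set.preimage_swap_prod]
        rfl
    _ ≤ _ := lintegral_Fr_mul_le_Lam (hw.comp measurable_swap) hs r
    _ = _ := by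
        rw [← Lam_comp_radii_swap (h := fun p => w p / p.2) (by fun_prop)]
        rfl

theorem abs_integral_mul_le_mul_toReal {α : Type*} [MeasurableSpace α] {μ : Measure α}
    {K w : α → ℝ} {c : ℝ} (hc : 0 ≤ c) {L : ℝ≥0∞} (hL : L ≠ ⊤)
    (h_le : ∫⁻ x, ENNReal.ofReal (|K x| * |w x|) ∂μ ≤ ENNReal.ofReal c * L) :
    |∫ x, K x * w x ∂μ| ≤ c * L.toReal := by
  have h_enorm : ‖∫ x, K x * w x ∂μ‖ₑ ≤ ENNReal.ofReal c * L := by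
    refine (enorm_integral_le_lintegral_enorm _).trans ?_
    simpa only [Real.enorm_eq_ofReal_abs, abs_mul] using h_le
  have h_real := ENNReal.toReal_mono (ENNReal.mul_ne_top ENNReal.ofReal_ne_top hL) h_enorm
  rwa [toReal_enorm, ENNReal.toReal_mul, ENNReal.toReal_ofReal hc, Real.norm_eq_abs] at h_real

end Velocity

/-- There is an absolute constant `C > 0` such that for every measurable
`w : Π → ℝ` and every `(r,s) ∈ Π`, `∫∫_Π |F^r| |w| ≤ C r Λ(W/ρ)` and
`∫∫_Π |F^s| |w| ≤ C s Λ(W/σ)`, where `(W/ρ)(x) = w(r_x,s_x)/r_x` and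
`(W/σ)(x) = w(r_x,s_x)/s_x`; in particular, if `Λ(W/ρ) < ∞` and `Λ(W/σ) < ∞`, then
`|u^r[w](r,s)| ≤ C r Λ(W/ρ)` and `|u^s[w](r,s)| ≤ C s Λ(W/σ)`. -/
theorem stmt_10 :
    ∃ C : ℝ, 0 < C ∧
      ∀ (w : ℝ × ℝ → ℝ), Measurable w → ∀ r s : ℝ, 0 ≤ r → 0 ≤ s →
        (∫⁻ p in quadrant, ENNReal.ofReal (|Fr r s p.1 p.2| * |w p|))
          ≤ ENNReal.ofReal (C * r) * Lam (fun x => w (rx x, sx x) / rx x) ∧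
        (∫⁻ p in quadrant, ENNReal.ofReal (|Fs r s p.1 p.2| * |w p|))
          ≤ ENNReal.ofReal (C * s) * Lam (fun x => w (rx x, sx x) / sx x) ∧
        (Lam (fun x => w (rx x, sx x) / rx x) < ⊤ →
          Lam (fun x => w (rx x, sx x) / sx x) < ⊤ →
          |uR w r s| ≤ C * r * (Lam (fun x => w (rx x, sx x) / rx x)).toReal ∧
          |uS w r s| ≤ C * s * (Lam (fun x => w (rx x, sx x) / sx x)).toReal) := by
  refine ⟨48 * (1 + 3 * π ^ 2), by positivity, fun w hw r s hr hs => ?_⟩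
  have hFr := lintegral_Fr_mul_le_Lam hw hr s
  have hFs := lintegral_Fs_mul_le_Lam hw r hs
  refine ⟨hFr, hFs, fun h_finite_r h_finite_s =>
    ⟨?_, abs_integral_mul_le_mul_toReal (by positivity) h_finite_s.ne hFs⟩⟩
  rw [uR, abs_neg]
  exact abs_integral_mul_le_mul_toReal (by positivity) h_finite_r.ne hFr
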